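/- arXiv:2410.22600 — 6 statements merged into one kernel-verified Lean document; each statement's English description precedes it below -/
import Mathlib

section
/- For every T ∈ ℕ, the following equivalence holds: [g(x_T) ≤ 0, and x_t ∉ F for all t ∈ {0,…,T}, and z₀ ≥ Σ_{k=0}^{T-1} c(x_k, π(x_k))] if and only if ĝ(x_T, y_T, z_T) ≤ 0. -/
open Classical

/-- The shifted indicator `𝕀(x ∈ F)`: `1` if `x ∈ F` and `-1` otherwise. -/
noncomputable def shiftedInd {X : Type*} (F : Set X) (x : X) : ℝ :=
  if x ∈ F then 1 else -1

/-- **Theorem 1 (Equivalence of the reach-avoid-budget constraints and the augmented goal).**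
For every `T`, the reach constraint `g (x T) ≤ 0`, the avoid constraint
`x t ∉ F` for all `t ≤ T`, and the upper-bound property
`z₀ ≥ ∑_{k<T} c (x k) (π (x k))` hold if and only if the augmented state
`(x T, y T, z T)` lies in the augmented goal set, i.e. `gAug (x T) (y T) (z T) ≤ 0`. -/
theorem min_cost_reach_avoid_augmented_equiv
    {X U : Type*} (f : X → U → X) (π : X → U) (c : X → U → ℝ)
    (g : X → ℝ) (F : Set X) (x₀ : X) (z₀ : ℝ) (C : ℝ) (hC : 0 < C)
    (x : ℕ → X) (y : ℕ → ℝ) (z : ℕ → ℝ)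
    (hx0 : x 0 = x₀) (hx : ∀ t, x (t + 1) = f (x t) (π (x t)))
    (hy0 : y 0 = shiftedInd F x₀)
    (hy : ∀ t, y (t + 1) = max (shiftedInd F (x (t + 1))) (y t))
    (hz0 : z 0 = z₀) (hz : ∀ t, z (t + 1) = z t - c (x t) (π (x t)))
    (gAug : X → ℝ → ℝ → ℝ)
    (hgAug : ∀ a b d, gAug a b d = max (g a) (max (C * b) (-d)))
    (T : ℕ) :
    (g (x T) ≤ 0 ∧ (∀ t ≤ T, x t ∉ F) ∧
        z₀ ≥ ∑ k ∈ Finset.range T, c (x k) (π (x k)))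
      ↔ gAug (x T) (y T) (z T) ≤ 0 := by
  have hI : ∀ a, shiftedInd F a ≤ 0 ↔ a ∉ F := by
    intro a
    unfold shiftedInd
    split_ifs with h
    · simp only [h, not_true_eq_false, iff_false]; norm_num
    · simp only [h, not_false_eq_true, iff_true]; norm_num
  have hY : ∀ n, y n ≤ 0 ↔ ∀ t ≤ n, x t ∉ F := by
    intro n
    induction n with
    | zero => rw [hy0, hI, ← hx0]; simp
    | succ n ih =>
      rw [hy, max_le_iff, hI, ih]
      constructor
      · rintro ⟨h1, h2⟩ t ht
        rcases Nat.lt_or_ge n t with h | h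
        · have : t = n + 1 := by omega
          rw [this]; exact h1
        · exact h2 t h
      · intro h
        exact ⟨h _ le_rfl, fun t ht => h t (by omega)⟩
  have hZ : ∀ n, z n = z₀ - ∑ k ∈ Finset.range n, c (x k) (π (x k)) := by
    intro n
    induction n with
    | zero => simp [hz0]
    | succ n ih => rw [hz, ih, Finset.sum_range_succ]; ring
  have hCy : C * y T ≤ 0 ↔ y T ≤ 0 := by
    constructor
    · intro h
      by_contra! h'
      have := mul_pos hC h'
      linarith
    · intro h
      exact mul_nonpos_of_nonneg_of_nonpos hC.le h
  rw [hgAug, max_le_iff, max_le_iff, hCy, hY, hZ, neg_nonpos, sub_nonneg]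
end

section
/- (Reach-Avoid Bellman Equation) Let (x_t)_{t∈ℕ} be the trajectory under policy π and suppose g and h are bounded below along the trajectory, i.e., there exists m ∈ ℝ with g(x_t) ≥ m and h(x_t) ≥ m for all t. For each k ∈ ℕ define the reach-avoid value V_k = inf_{T ∈ ℕ} max( g(x_{k+T}), max_{t ∈ {0,…,T}} h(x_{k+t}) ). Then V_0 = max( h(x_0), min( g(x_0), V_1 ) ). -/
/-- **Reach-Avoid Bellman Equation.** Let `(x t)` be the trajectory under
policy `π`, with `g` and `h` bounded below along the trajectory. For each `k`
define the reach-avoid value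
`V k = ⨅ T, max (g (x (k + T))) (max_{t ∈ {0,…,T}} h (x (k + t)))`.
Then `V 0 = max (h (x 0)) (min (g (x 0)) (V 1))`. -/
theorem reach_avoid_bellman_equation
    {X U : Type*} (f : X → U → X) (π : X → U) (x₀ : X)
    (g h : X → ℝ)
    (x : ℕ → X) (hx0 : x 0 = x₀) (hx : ∀ t, x (t + 1) = f (x t) (π (x t)))
    (m : ℝ) (hbdd : ∀ t, m ≤ g (x t) ∧ m ≤ h (x t))
    (V : ℕ → ℝ)
    (hV : ∀ k, V k = ⨅ T : ℕ,
      max (g (x (k + T)))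
        ((Finset.range (T + 1)).sup'
          (Finset.nonempty_range_iff.mpr (Nat.succ_ne_zero T))
          (fun t => h (x (k + t))))) :
    V 0 = max (h (x 0)) (min (g (x 0)) (V 1)) := by
  have key : ∀ k c, V k < c ↔ ∃ T, g (x (k + T)) < c ∧ ∀ t, t ≤ T → h (x (k + t)) < c := by
    intro k c
    rw [hV k, ciInf_lt_iff]
    · simp only [max_lt_iff, Finset.sup'_lt_iff, Finset.mem_range, Nat.lt_succ_iff]
    · refine ⟨m, ?_⟩
      rintro _ ⟨T, rfl⟩
      exact le_max_of_le_left (hbdd _).1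
  refine eq_of_forall_gt_iff fun c => ?_
  rw [max_lt_iff, min_lt_iff, key, key]
  constructor
  · rintro ⟨T, hg, hh⟩
    refine ⟨hh 0 (Nat.zero_le _), ?_⟩
    cases T with
    | zero => exact Or.inl hg
    | succ T =>
      refine Or.inr ⟨T, ?_, fun t ht => ?_⟩
      · rw [show 1 + T = 0 + (T + 1) by omega]; exact hg
      · rw [show 1 + t = 0 + (t + 1) by omega]; exact hh _ (by omega)
  · rintro ⟨h0, hg | ⟨T, hg, hh⟩⟩
    · refine ⟨0, hg, fun t ht => ?_⟩
      obtain rfl : t = 0 := by omega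
      exact h0
    · refine ⟨T + 1, ?_, fun t ht => ?_⟩
      · rw [show 0 + (T + 1) = 1 + T by omega]; exact hg
      · cases t with
        | zero => exact h0
        | succ t =>
          rw [show 0 + (t + 1) = 1 + t by omega]; exact hh _ (by omega)
end

section
/- Let γ ∈ (0,1), T, T_max ∈ ℕ with 1 ≤ T_max and T ≤ T_max, ε > 0, and G_max ≥ 0. Let (g_t)_{t∈ℕ} and (V_t)_{t∈ℕ} be real sequences such that g_t ≤ G_max for all t ≤ T, g_T < -ε, and V_t = (1-γ)·g_t + γ·min(g_t, V_{t+1}) for all t ≤ T. If γ^{T_max}·ε > (1 - γ^{T_max})·G_max, then V_0 < 0. -/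
/-- If `γ ∈ (0,1)`, `1 ≤ Tmax`, `T ≤ Tmax`, `ε > 0`, `Gmax ≥ 0`, the sequence
`g` is bounded by `Gmax` up to time `T`, `g T < -ε`, the discounted
reachability Bellman recursion `V t = (1-γ) g t + γ min (g t) (V (t+1))` holds
for all `t ≤ T`, and `γ^Tmax * ε > (1 - γ^Tmax) * Gmax`, then `V 0 < 0`. -/
theorem discounted_value_negative_of_reaching_goal
    (γ : ℝ) (hγ0 : 0 < γ) (hγ1 : γ < 1)
    (T Tmax : ℕ) (hTmax : 1 ≤ Tmax) (hT : T ≤ Tmax)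
    (ε : ℝ) (hε : 0 < ε) (Gmax : ℝ) (hG : 0 ≤ Gmax)
    (g V : ℕ → ℝ)
    (hg : ∀ t ≤ T, g t ≤ Gmax) (hgT : g T < -ε)
    (hV : ∀ t ≤ T, V t = (1 - γ) * g t + γ * min (g t) (V (t + 1)))
    (hkey : (1 - γ ^ Tmax) * Gmax < γ ^ Tmax * ε) :
    V 0 < 0 := by
  have main : ∀ k ≤ T, V (T - k) ≤ Gmax - γ ^ k * (Gmax + ε) := by
    intro k
    induction k with
    | zero =>
      intro _
      have h := hV T le_rfl
      have h2 := mul_le_mul_of_nonneg_left (min_le_left (g T) (V (T + 1))) hγ0.le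
      simp only [Nat.sub_zero, pow_zero]
      linarith
    | succ k ih =>
      intro hk
      have ih' := ih (by omega)
      have h := hV (T - (k + 1)) (by omega)
      have e : T - (k + 1) + 1 = T - k := by omega
      rw [e] at h
      have h2 := mul_le_mul_of_nonneg_left
        ((min_le_right (g (T - (k + 1))) (V (T - k))).trans ih') hγ0.le
      have h3 := mul_le_mul_of_nonneg_left (hg (T - (k + 1)) (by omega))
        (sub_nonneg.2 hγ1.le)
      have e2 : γ ^ (k + 1) * (Gmax + ε) = γ * (γ ^ k * (Gmax + ε)) := by ring
      rw [e2]
      linarith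
  have h0 := main T le_rfl
  rw [Nat.sub_self] at h0
  have hp : γ ^ Tmax ≤ γ ^ T := pow_le_pow_of_le_one hγ0.le hγ1.le hT
  have h1 := mul_le_mul_of_nonneg_right hp (add_nonneg hG hε.le)
  linarith
end

section
/- Let γ ∈ [0,1), let S be a nonempty type, let ĝ : S → ℝ be bounded, and let F : S → S. Then there exists exactly one bounded function V : S → ℝ satisfying the discounted reachability Bellman equation V(s) = (1-γ)·ĝ(s) + γ·min(ĝ(s), V(F(s))) for all s ∈ S. -/
/-- For `γ ∈ [0,1)`, a nonempty state space `S`, a bounded augmented goal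
function `gAug : S → ℝ` and a transition map `F : S → S`, there exists exactly
one bounded function `V : S → ℝ` satisfying the discounted reachability Bellman
equation `V s = (1-γ) * gAug s + γ * min (gAug s) (V (F s))` for all `s`. -/
theorem discounted_bellman_unique_bounded_fixed_point
    {S : Type*} [Nonempty S] (γ : ℝ) (hγ0 : 0 ≤ γ) (hγ1 : γ < 1)
    (gAug : S → ℝ) (hg : ∃ M : ℝ, ∀ s, |gAug s| ≤ M) (F : S → S) :
    ∃! V : S → ℝ, (∃ M : ℝ, ∀ s, |V s| ≤ M) ∧
      ∀ s, V s = (1 - γ) * gAug s + γ * min (gAug s) (V (F s)) := by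
  classical
  obtain ⟨M, hM⟩ := hg
  let : TopologicalSpace S := ⊥
  have : DiscreteTopology S := ⟨rfl⟩
  have hmin : ∀ a x y : ℝ, |min a x - min a y| ≤ |x - y| := by
    intro a x y
    have h := abs_min_sub_min_le_max a x a y
    simpa using h
  have hbd : ∀ (W : S → ℝ) (K : ℝ), (∀ s, |W s| ≤ K) → ∀ s,
      |(1 - γ) * gAug s + γ * min (gAug s) (W (F s))| ≤ max M K := by
    intro W K hW s
    have h1 := abs_le.1 ((hM s).trans (le_max_left M K))
    have h2 := abs_le.1 ((hW (F s)).trans (le_max_right M K))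
    have h3 : -(max M K) ≤ min (gAug s) (W (F s)) := le_min h1.1 h2.1
    have h4 : min (gAug s) (W (F s)) ≤ max M K := (min_le_left _ _).trans h1.2
    rw [abs_le]
    constructor <;> nlinarith
  let T : BoundedContinuousFunction S ℝ → BoundedContinuousFunction S ℝ := fun W =>
    BoundedContinuousFunction.ofNormedAddCommGroup
      (fun s => (1 - γ) * gAug s + γ * min (gAug s) (W (F s)))
      continuous_of_discreteTopology (max M ‖W‖)
      (hbd W ‖W‖ (fun s => W.norm_coe_le_norm s))
  have hT : ∀ W s, T W s = (1 - γ) * gAug s + γ * min (gAug s) (W (F s)) := fun _ _ => rfl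
  have hc : ContractingWith ⟨γ, hγ0⟩ T := by
    refine ⟨by exact_mod_cast hγ1, LipschitzWith.of_dist_le_mul fun V W => ?_⟩
    rw [BoundedContinuousFunction.dist_le (by positivity)]
    intro s
    rw [hT, hT, Real.dist_eq, add_sub_add_left_eq_sub, ← mul_sub, abs_mul, abs_of_nonneg hγ0]
    refine mul_le_mul_of_nonneg_left ((hmin _ _ _).trans ?_) hγ0
    have h := BoundedContinuousFunction.dist_coe_le_dist (f := V) (g := W) (F s)
    rwa [Real.dist_eq] at h
  obtain ⟨U, hU⟩ : ∃ U : BoundedContinuousFunction S ℝ, U = ContractingWith.fixedPoint T hc := ⟨_, rfl⟩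
  have hfix : T U = U := hU ▸ hc.fixedPoint_isFixedPt
  refine ⟨U, ⟨⟨_, fun s => U.norm_coe_le_norm s⟩, fun s => ?_⟩, ?_⟩
  · rw [← hT, hfix]
  · rintro W ⟨⟨K, hK⟩, hW⟩
    let W' : BoundedContinuousFunction S ℝ :=
      BoundedContinuousFunction.ofNormedAddCommGroup W continuous_of_discreteTopology K hK
    have hW' : Function.IsFixedPt T W' := by
      ext s
      exact (hW s).symm
    have : W' = U := hU ▸ hc.fixedPoint_unique hW'
    exact congrArg (fun f : BoundedContinuousFunction S ℝ => (f : S → ℝ)) this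
end

section
/- (Equivalence of the minimum-cost reach-avoid problem and its epigraph reformulation) Assume c(x,u) ≥ 0 for all x, u. Call a pair (π, T) of a policy π : X → U and a horizon T ∈ ℕ feasible if the trajectory x_{t+1}^π = f(x_t^π, π(x_t^π)) from x₀ satisfies g(x_T^π) ≤ 0 and x_t^π ∉ F for all t ∈ {0,…,T}. Assume at least one feasible pair exists. Then the infimum over feasible pairs (π,T) of the cumulative cost Σ_{k=0}^{T-1} c(x_k^π, π(x_k^π)) equals the infimum of the set { z₀ ∈ ℝ | there exist a policy π and T ∈ ℕ such that ĝ(x_T^π, y_T^π, z_T^{π,z₀}) ≤ 0 }, where (y_t^π, z_t^{π,z₀}) is the augmented trajectory under π with initial budget z₀. -/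
open Classical

/-- The trajectory `x_{t+1} = f (x_t) (π (x_t))` from initial state `x₀`. -/
def traj {X U : Type*} (f : X → U → X) (π : X → U) (x₀ : X) : ℕ → X
  | 0 => x₀
  | t + 1 => f (traj f π x₀ t) (π (traj f π x₀ t))

/-- The augmented `y`-component: `y₀ = 𝕀(x₀ ∈ F)`,
`y_{t+1} = max (𝕀(x_{t+1} ∈ F)) (y_t)`. -/
noncomputable def ytraj {X U : Type*} (f : X → U → X) (π : X → U) (F : Set X)
    (x₀ : X) : ℕ → ℝ
  | 0 => if x₀ ∈ F then 1 else -1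
  | t + 1 => max (if traj f π x₀ (t + 1) ∈ F then (1 : ℝ) else -1)
      (ytraj f π F x₀ t)

/-- The augmented `z`-component (remaining cost budget):
`z_{t+1} = z_t - c (x_t) (π (x_t))` with `z_0 = z₀`. -/
def ztraj {X U : Type*} (f : X → U → X) (π : X → U) (c : X → U → ℝ)
    (x₀ : X) (z₀ : ℝ) : ℕ → ℝ
  | 0 => z₀
  | t + 1 => ztraj f π c x₀ z₀ t - c (traj f π x₀ t) (π (traj f π x₀ t))

theorem ytraj_nonpos_iff {X U : Type*} (f : X → U → X) (π : X → U) (F : Set X)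
    (x₀ : X) (T : ℕ) : ytraj f π F x₀ T ≤ 0 ↔ ∀ t ≤ T, traj f π x₀ t ∉ F := by
  induction T with
  | zero =>
    by_cases h : x₀ ∈ F <;> simp [ytraj, traj, h]
  | succ n ih =>
    have key : (∀ t ≤ n + 1, traj f π x₀ t ∉ F) ↔
        traj f π x₀ (n + 1) ∉ F ∧ ∀ t ≤ n, traj f π x₀ t ∉ F := by
      constructor
      · intro h
        exact ⟨h _ le_rfl, fun t ht => h t (by omega)⟩
      · rintro ⟨h1, h2⟩ t ht
        rcases Nat.lt_or_ge n t with h | h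
        · have : t = n + 1 := by omega
          rw [this]; exact h1
        · exact h2 t h
    rw [key, ytraj, max_le_iff, ih]
    refine and_congr ?_ Iff.rfl
    by_cases h : traj f π x₀ (n + 1) ∈ F
    · simp only [h, if_true]; norm_num
    · simp only [h, if_false]; norm_num

theorem ztraj_eq_sub_sum {X U : Type*} (f : X → U → X) (π : X → U) (c : X → U → ℝ)
    (x₀ : X) (z₀ : ℝ) (T : ℕ) : ztraj f π c x₀ z₀ T =
      z₀ - ∑ k ∈ Finset.range T, c (traj f π x₀ k) (π (traj f π x₀ k)) := by
  induction T with
  | zero => simp [ztraj]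
  | succ n ih => rw [ztraj, ih, Finset.sum_range_succ]; ring

/-- **Equivalence of the minimum-cost reach-avoid problem and its epigraph
reformulation.** Assume the cost is nonnegative and at least one feasible
policy-horizon pair exists. Then the infimum of the cumulative cost over
feasible pairs `(π, T)` (those whose trajectory reaches the goal
`{x | g x ≤ 0}` at time `T` while avoiding `F` up to time `T`) equals the
infimum of the set of budgets `z₀` for which some policy `π` and horizon `T`
drive the augmented state into the augmented goal,
`gAug (x_T, y_T, z_T) = max (g x_T) (max (C * y_T) (-z_T)) ≤ 0`. -/
theorem min_cost_reach_avoid_epigraph_equivalence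
    {X U : Type*} (f : X → U → X) (c : X → U → ℝ) (g : X → ℝ) (F : Set X)
    (x₀ : X) (C : ℝ) (hC : 0 < C)
    (hc : ∀ x u, 0 ≤ c x u)
    (hfeas : ∃ (π : X → U) (T : ℕ),
      g (traj f π x₀ T) ≤ 0 ∧ ∀ t ≤ T, traj f π x₀ t ∉ F) :
    sInf {v : ℝ | ∃ (π : X → U) (T : ℕ),
        (g (traj f π x₀ T) ≤ 0 ∧ ∀ t ≤ T, traj f π x₀ t ∉ F) ∧
        v = ∑ k ∈ Finset.range T, c (traj f π x₀ k) (π (traj f π x₀ k))} =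
      sInf {z₀ : ℝ | ∃ (π : X → U) (T : ℕ),
        max (g (traj f π x₀ T))
          (max (C * ytraj f π F x₀ T) (-(ztraj f π c x₀ z₀ T))) ≤ 0} := by
  have aug : ∀ (π : X → U) (T : ℕ) (z₀ : ℝ),
      max (g (traj f π x₀ T))
          (max (C * ytraj f π F x₀ T) (-(ztraj f π c x₀ z₀ T))) ≤ 0 ↔
        (g (traj f π x₀ T) ≤ 0 ∧ ∀ t ≤ T, traj f π x₀ t ∉ F) ∧
        ∑ k ∈ Finset.range T, c (traj f π x₀ k) (π (traj f π x₀ k)) ≤ z₀ := by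
    intro π T z₀
    rw [max_le_iff, max_le_iff, ← ytraj_nonpos_iff, ztraj_eq_sub_sum, and_assoc]
    refine and_congr Iff.rfl (and_congr ?_ ?_)
    · constructor <;> intro h <;> nlinarith
    · constructor <;> intro h <;> linarith
  simp only [aug]
  obtain ⟨π₀, T₀, h₀⟩ := hfeas
  apply le_antisymm
  · refine le_csInf ⟨_, π₀, T₀, h₀, le_rfl⟩ ?_
    rintro z ⟨π, T, h, hz⟩
    refine le_trans (csInf_le ⟨0, ?_⟩ ⟨π, T, h, rfl⟩) hz
    rintro v ⟨π, T, _, rfl⟩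
    exact Finset.sum_nonneg fun _ _ => hc _ _
  · refine le_csInf ⟨_, π₀, T₀, h₀, rfl⟩ ?_
    rintro v ⟨π, T, h, rfl⟩
    refine csInf_le ⟨0, ?_⟩ ⟨π, T, h, le_rfl⟩
    rintro z ⟨π, T, _, hz⟩
    exact le_trans (Finset.sum_nonneg fun _ _ => hc _ _) hz
end

section
/- For every w ≥ 0, the point (p*, q*) given by p* = 1 if w ≥ 1 and p* = 0 otherwise, and q* = 1 if w ≤ 2/3 and q* = 0 otherwise, is a minimizer of the scalarized objective -R(p,q) + w·C(p,q) over (p,q) ∈ [0,1] × [0,1]. -/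
open Classical

/-- Expected reward of the policy taking the left action at state `A` with
probability `p` and at state `B` with probability `q`. -/
noncomputable def Rfun (p q : ℝ) : ℝ := (1/2) * (10*p + 20*(1-p)) + (1/2) * (20*q)

/-- Expected cumulative cost of the policy taking the left action at state `A`
with probability `p` and at state `B` with probability `q`. -/
noncomputable def Cfun (p q : ℝ) : ℝ := (1/2) * (10*p + 20*(1-p)) + (1/2) * (30*q)

/-- For every `w ≥ 0`, the point `(p*, q*)` with `p* = 1` if `w ≥ 1` (else `0`)
and `q* = 1` if `w ≤ 2/3` (else `0`) minimizes the scalarized objective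
`-R + w * C` over `[0,1] × [0,1]`. -/
theorem scalarized_minimizer (w : ℝ) (hw : 0 ≤ w) :
    (if 1 ≤ w then (1 : ℝ) else 0) ∈ Set.Icc (0 : ℝ) 1 ∧
    (if w ≤ 2/3 then (1 : ℝ) else 0) ∈ Set.Icc (0 : ℝ) 1 ∧
    ∀ p ∈ Set.Icc (0 : ℝ) 1, ∀ q ∈ Set.Icc (0 : ℝ) 1,
      -Rfun (if 1 ≤ w then 1 else 0) (if w ≤ 2/3 then 1 else 0)
          + w * Cfun (if 1 ≤ w then 1 else 0) (if w ≤ 2/3 then 1 else 0)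
        ≤ -Rfun p q + w * Cfun p q := by
  refine ⟨by split_ifs <;> simp, by split_ifs <;> simp, ?_⟩
  rintro p ⟨hp0, hp1⟩ q ⟨hq0, hq1⟩
  unfold Rfun Cfun
  have key1 : (w - 1) * (p - (if 1 ≤ w then (1 : ℝ) else 0)) ≤ 0 := by
    split_ifs with h
    · nlinarith
    · nlinarith
  have key2 : 0 ≤ (3 * w - 2) * (q - (if w ≤ 2/3 then (1 : ℝ) else 0)) := by
    split_ifs with h
    · nlinarith
    · nlinarith
  generalize (if 1 ≤ w then (1 : ℝ) else 0) = a at *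
  generalize (if w ≤ 2/3 then (1 : ℝ) else 0) = b at *
  nlinarith
end
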